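/- arXiv:0709.4485 — 2 statements merged into one kernel-verified Lean document; each statement's English description precedes it below -/
import Mathlib

section
/- Dichotomy for divisors on graphs: Let G be a finite connected loopless multigraph. For every divisor D on G, exactly one of the following holds: (a) there exists an effective divisor equivalent to D (i.e., |D| ≠ ∅); or (b) there exists a linear order ≺ on V such that some effective divisor is equivalent to ν_≺ − D (i.e., |ν_≺ − D| ≠ ∅). -/
/-!
The two alternatives exclude each other because `ν_≺` is never equivalent to an effective
divisor: if `ν_≺ + Δf ≥ 0`, evaluate at the `≺`-least vertex among the minimizers of `f`, where
every earlier neighbour has a strictly larger `f`-value, so the value is at most `-1`.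
Adding effective divisors equivalent to `D` and to `ν_≺ - D` would give such a divisor.

For existence, fix a vertex `q`. There is a strictly superharmonic potential `g` vanishing at `q`
(`exists_potential`), which shows that the `f` with `f q = 0` and `D + Δf ≥ 0` away from `q` exist
and are bounded below. One with minimal total sum makes `D' = D + Δf` a `q`-reduced divisor
(`exists_reduced`): no nonempty set avoiding `q` can fire legally. Burning the graph from `q`
(`exists_burning`) then orders the vertices so that `D' ≤ ν_≺` away from `q`; if `D'` is not
effective then `D' q ≤ -1 ≤ ν_≺ q`, so `ν_≺ - D'` is effective.
-/

open scoped Classical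

noncomputable section

/-- A divisor `D'` is equivalent to `D` if `D - D'` is the principal divisor of some
integer-valued function `f` on the vertices. -/
def GEquiv {V : Type} [Fintype V] (m : V → V → ℕ) (D D' : V → ℤ) : Prop :=
  ∃ f : V → ℤ, ∀ v, D v - D' v = ∑ w, (m v w : ℤ) * (f v - f w)

/-- A divisor is effective if it is nonnegative everywhere. -/
def GEff {V : Type} (D : V → ℤ) : Prop := ∀ v, 0 ≤ D v

/-- `|D| ≠ ∅`: some effective divisor is equivalent to `D`. -/
def GLinNE {V : Type} [Fintype V] (m : V → V → ℕ) (D : V → ℤ) : Prop :=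
  ∃ E : V → ℤ, GEff E ∧ GEquiv m E D

/-- The divisor `ν_≺` associated to a linear order on the vertices:
`ν_≺(v) = (Σ_{w ≺ v} m v w) - 1`. -/
def nuOrd {V : Type} [Fintype V] (m : V → V → ℕ) (L : LinearOrder V) (v : V) : ℤ :=
  (∑ w ∈ Finset.univ.filter (fun w => L.lt w v), (m v w : ℤ)) - 1

/-- The graph Laplacian of `f`, that is, the principal divisor `D_f`. -/
def glap {V : Type} [Fintype V] (m : V → V → ℕ) (f : V → ℤ) (v : V) : ℤ :=
  ∑ w, (m v w : ℤ) * (f v - f w)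

theorem glap_add {V : Type} [Fintype V] (m : V → V → ℕ) (f g : V → ℤ) (v : V) :
    glap m (fun x => f x + g x) v = glap m f v + glap m g v := by
  unfold glap
  rw [← Finset.sum_add_distrib]
  exact Finset.sum_congr rfl fun w _ => by ring

theorem glap_smul {V : Type} [Fintype V] (m : V → V → ℕ) (c : ℤ) (f : V → ℤ) (v : V) :
    glap m (fun x => c * f x) v = c * glap m f v := by
  unfold glap
  rw [Finset.mul_sum]
  exact Finset.sum_congr rfl fun w _ => by ring

/-- Minimum principle. -/
theorem glap_nonpos_of_min {V : Type} [Fintype V] (m : V → V → ℕ) (f : V → ℤ) (v : V)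
    (hv : ∀ w, f v ≤ f w) : glap m f v ≤ 0 :=
  Finset.sum_nonpos fun w _ =>
    mul_nonpos_of_nonneg_of_nonpos (Int.natCast_nonneg _) (by linarith [hv w])

/-- A divisor `ν_≺` is not equivalent to an effective one. -/
theorem nuOrd_not_effective {V : Type} [Fintype V] [Nonempty V] (m : V → V → ℕ)
    (L : LinearOrder V) (f : V → ℤ) (h : ∀ v, 0 ≤ nuOrd m L v + glap m f v) : False := by
  obtain ⟨v₀, -, hv₀⟩ := Finset.exists_min_image Finset.univ f Finset.univ_nonempty
  let A : Finset V := Finset.univ.filter fun v => f v = f v₀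
  obtain ⟨v, hvA, hv⟩ : ∃ v ∈ A, ∀ w ∈ A, L.le v w :=
    @Finset.exists_min_image V V L A id ⟨v₀, by simp [A]⟩
  have hfv : f v = f v₀ := by simpa [A] using hvA
  have hle : glap m f v ≤
      ∑ w, (if L.lt w v then -(m v w : ℤ) else 0) := by
    refine Finset.sum_le_sum fun w _ => ?_
    have hm : (0 : ℤ) ≤ m v w := Int.natCast_nonneg _
    have h0 : f v ≤ f w := hfv ▸ hv₀ w (Finset.mem_univ _)
    split_ifs with hlt
    · have : f w ≠ f v₀ := fun hw =>
        (@not_le_of_gt V L.toPreorder _ _ hlt) (hv w (by simp [A, hw]))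
      have : f v + 1 ≤ f w := by omega
      nlinarith
    · nlinarith
  have h1 := h v
  unfold nuOrd at h1
  rw [← Finset.sum_filter, Finset.sum_neg_distrib] at hle
  linarith

/-- Abstract burning: if every nonempty set `A` of unburnt vertices contains one that may burn
next (`P A v`), then all vertices can be numbered in a burning order. -/
theorem exists_burning_aux {V : Type} (P : Finset V → V → Prop)
    (hP : ∀ A : Finset V, A.Nonempty → ∃ v ∈ A, P A v) (A : Finset V) :
    ∃ r : V → ℕ, Set.InjOn r A ∧ ∀ v ∈ A, P (A.filter fun w => r v ≤ r w) v := by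
  induction A using Finset.strongInduction with
  | H A ih =>
    rcases A.eq_empty_or_nonempty with rfl | hA
    · exact ⟨fun _ => 0, by simp, by simp⟩
    obtain ⟨v₀, hv₀, hPv₀⟩ := hP A hA
    obtain ⟨r, hr, hPr⟩ := ih _ (Finset.erase_ssubset hv₀)
    refine ⟨fun w => if w = v₀ then 0 else r w + 1, ?_, ?_⟩
    · intro a ha b hb hab
      by_cases h1 : a = v₀ <;> by_cases h2 : b = v₀ <;> simp [h1, h2] at hab ⊢
      exact hr (by simpa [h1] using ha) (by simpa [h2] using hb) hab
    · intro v hv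
      by_cases h1 : v = v₀
      · subst h1
        simpa using hPv₀
      · convert hPr v (Finset.mem_erase.2 ⟨h1, hv⟩) using 1
        ext w
        by_cases h2 : w = v₀ <;> simp [h1, h2]

/-- Burning from `q`: only the sets avoiding `q` need a vertex that may burn next. -/
theorem exists_burning {V : Type} [Fintype V] (q : V) (P : Finset V → V → Prop)
    (hP : ∀ A : Finset V, A.Nonempty → q ∉ A → ∃ v ∈ A, P A v) :
    ∃ r : V → ℕ, Function.Injective r ∧
      ∀ v, v ≠ q → P (Finset.univ.filter fun w => r v ≤ r w) v := by
  obtain ⟨r, hr, h⟩ := exists_burning_aux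
    (fun A v => (q ∈ A → v = q) ∧ (q ∉ A → P A v)) (by
      intro A hA
      by_cases hq : q ∈ A
      · exact ⟨q, hq, fun _ => rfl, fun h => absurd hq h⟩
      · obtain ⟨v, hv, hPv⟩ := hP A hA hq
        exact ⟨v, hv, fun h => absurd h hq, fun _ => hPv⟩) Finset.univ
  refine ⟨r, fun a b hab => hr (by simp) (by simp) hab, fun v hv => ?_⟩
  obtain ⟨h1, h2⟩ := h v (Finset.mem_univ v)
  exact h2 fun hq => hv (h1 hq)

/-- On a connected graph there is a potential vanishing at `q` and strictly superharmonic
elsewhere. It is `K ^ (n - r q) - K ^ (n - r v)` for a burning order `r` from `q`, in which each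
`v ≠ q` has an earlier neighbour, and `K` larger than every degree. -/
theorem exists_potential {V : Type} [Fintype V] (m : V → V → ℕ)
    (hconn : ∀ v w : V, Relation.ReflTransGen (fun a b => 0 < m a b) v w) (q : V) :
    ∃ g : V → ℤ, g q = 0 ∧ ∀ v, v ≠ q → 1 ≤ glap m g v := by
  obtain ⟨r, -, hr⟩ := exists_burning q (fun A v => ∃ w, w ∉ A ∧ 0 < m v w) (by
    intro A ⟨a, ha⟩ hq
    by_contra! hcon
    have key : ∀ b, Relation.ReflTransGen (fun a b => 0 < m a b) a b → b ∈ A := by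
      intro b hb
      induction hb with
      | refl => exact ha
      | tail _ hbc ih =>
        by_contra hc
        exact absurd (hcon _ ih _ hc) (by omega)
    exact hq (key q (hconn a q)))
  let K : ℤ := 1 + ∑ v, ∑ w, (m v w : ℤ)
  let n : ℕ := ∑ v, r v
  have hn : ∀ v, r v ≤ n := fun v =>
    Finset.single_le_sum (f := r) (fun _ _ => Nat.zero_le _) (Finset.mem_univ v)
  have hdeg : ∀ v, (∑ w, (m v w : ℤ)) + 1 ≤ K := by
    intro v
    have := Finset.single_le_sum (f := fun v => ∑ w, (m v w : ℤ))
      (fun _ _ => Finset.sum_nonneg fun _ _ => Int.natCast_nonneg _) (Finset.mem_univ v)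
    simp only [K]
    linarith
  have hK : 1 ≤ K := by
    have : (0 : ℤ) ≤ ∑ v, ∑ w, (m v w : ℤ) := by positivity
    simp only [K]
    linarith
  refine ⟨fun v => K ^ (n - r q) - K ^ (n - r v), by simp, fun v hv => ?_⟩
  obtain ⟨u, hu, hmu⟩ := hr v hv
  have hru : r u < r v := by simpa using hu
  have hc : 1 ≤ K ^ (n - r v) := one_le_pow₀ hK
  have hcu : K * K ^ (n - r v) ≤ K ^ (n - r u) := by
    rw [← pow_succ']
    exact pow_le_pow_right₀ hK (by have := hn v; omega)
  -- The earlier neighbour `u` contributes enough to outweigh all others.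
  have hlow : ∑ w, ((if w = u then K ^ (n - r u) else 0) - (m v w : ℤ) * K ^ (n - r v)) ≤
      glap m (fun v => K ^ (n - r q) - K ^ (n - r v)) v := by
    refine Finset.sum_le_sum fun w _ => ?_
    have hw : 1 ≤ K ^ (n - r w) := one_le_pow₀ hK
    split_ifs with h
    · subst h
      have : (1 : ℤ) ≤ m v w := by exact_mod_cast hmu
      nlinarith
    · have : (0 : ℤ) ≤ m v w := Int.natCast_nonneg _
      nlinarith
  rw [Finset.sum_sub_distrib, ← Finset.sum_mul] at hlow
  simp only [Finset.sum_ite_eq', Finset.mem_univ, if_true] at hlow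
  have := hdeg v
  nlinarith

/-- Firing the set `A`: subtracting its indicator from `f`. -/
theorem glap_sub_indicator {V : Type} [Fintype V] (m : V → V → ℕ) (f : V → ℤ) (A : Finset V)
    (v : V) :
    glap m (fun x => f x - if x ∈ A then 1 else 0) v = glap m f v +
      if v ∈ A then -∑ w ∈ Finset.univ.filter (fun w => w ∉ A), (m v w : ℤ)
      else ∑ w ∈ Finset.univ.filter (fun w => w ∈ A), (m v w : ℤ) := by
  unfold glap
  split_ifs with hv
  · rw [Finset.sum_filter, ← Finset.sum_neg_distrib, ← Finset.sum_add_distrib]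
    refine Finset.sum_congr rfl fun w _ => ?_
    by_cases hw : w ∈ A <;> simp only [hv, hw, not_true, not_false_iff, if_true, if_false] <;> ring
  · rw [Finset.sum_filter, ← Finset.sum_add_distrib]
    refine Finset.sum_congr rfl fun w _ => ?_
    by_cases hw : w ∈ A <;> simp only [hv, hw, if_true, if_false] <;> ring

/-- Every divisor is equivalent to a `q`-reduced one. -/
theorem exists_reduced {V : Type} [Fintype V] (m : V → V → ℕ)
    (hconn : ∀ v w : V, Relation.ReflTransGen (fun a b => 0 < m a b) v w) (q : V) (D : V → ℤ) :
    ∃ f : V → ℤ, (∀ v, v ≠ q → 0 ≤ D v + glap m f v) ∧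
      ∀ A : Finset V, A.Nonempty → q ∉ A → ∃ v ∈ A,
        D v + glap m f v < ∑ w ∈ Finset.univ.filter (fun w => w ∉ A), (m v w : ℤ) := by
  obtain ⟨g, hgq, hg⟩ := exists_potential m hconn q
  let N : ℤ := 1 + ∑ v, |D v|
  have hN : ∀ v, |D v| + 1 ≤ N := by
    intro v
    have := Finset.single_le_sum (f := fun v => |D v|) (fun _ _ => abs_nonneg _)
      (Finset.mem_univ v)
    simp only [N]
    linarith
  let S : (V → ℤ) → Prop := fun f => f q = 0 ∧ ∀ v, v ≠ q → 0 ≤ D v + glap m f v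
  have hbelow : ∀ f, S f → ∀ v, -(N * g v) ≤ f v := by
    intro f hf
    -- `f + N g` is strictly superharmonic away from `q`, so its minimum is its value `0` at `q`.
    obtain ⟨v, -, hv⟩ := Finset.exists_min_image Finset.univ (fun x => f x + N * g x)
      ⟨q, Finset.mem_univ q⟩
    have hvq : v = q := by
      by_contra hne
      have h1 := glap_nonpos_of_min m (fun x => f x + N * g x) v
        fun w => hv w (Finset.mem_univ w)
      rw [glap_add m f (fun x => N * g x), glap_smul] at h1
      have h2 := hf.2 v hne
      have h3 := hg v hne
      have h4 := hN v
      have h5 := le_abs_self (D v)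
      have h6 := abs_nonneg (D v)
      nlinarith
    intro w
    have := hv w (Finset.mem_univ w)
    simp only [hvq, hf.1, hgq] at this
    linarith
  obtain ⟨s, ⟨f, hf, hfs⟩, hmin⟩ := Int.exists_least_of_bdd
    (P := fun z => ∃ f, S f ∧ ∑ v, f v = z)
    ⟨∑ v, -(N * g v), by
      rintro z ⟨f, hf, rfl⟩
      exact Finset.sum_le_sum fun v _ => hbelow f hf v⟩
    ⟨_, fun v => N * g v, ⟨by simp [hgq], fun v hv => by
      rw [glap_smul]
      have h3 := hg v hv
      have h4 := hN v
      have h5 := neg_abs_le (D v)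
      have h6 := abs_nonneg (D v)
      nlinarith⟩, rfl⟩
  refine ⟨f, hf.2, fun A hA hq => ?_⟩
  by_contra! hcon
  -- Otherwise `A` fires legally, which lowers the sum of `f`.
  have hle := hmin _ ⟨fun x => f x - if x ∈ A then 1 else 0, ⟨by simp [hq, hf.1], fun v hv => by
    rw [glap_sub_indicator]
    split_ifs with hvA
    · linarith [hcon v hvA]
    · have : (0 : ℤ) ≤ ∑ w ∈ Finset.univ.filter (fun w => w ∈ A), (m v w : ℤ) := by positivity
      linarith [hf.2 v hv]⟩, rfl⟩
  rw [Finset.sum_sub_distrib, hfs] at hle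
  simp at hle
  exact hA.ne_empty hle

/-- Dichotomy for divisors on graphs: exactly one of `|D| ≠ ∅` and
`∃ ≺, |ν_≺ - D| ≠ ∅` holds. -/
theorem divisor_dichotomy {V : Type} [Fintype V] [Nonempty V]
    (m : V → V → ℕ)
    (hsymm : ∀ v w, m v w = m w v)
    (hloopless : ∀ v, m v v = 0)
    (hconn : ∀ v w : V, Relation.ReflTransGen (fun a b => 0 < m a b) v w)
    (D : V → ℤ) :
    Xor' (GLinNE m D) (∃ L : LinearOrder V, GLinNE m (fun v => nuOrd m L v - D v)) := by
  have hex : ¬ GLinNE m D → ∃ L : LinearOrder V, GLinNE m (fun v => nuOrd m L v - D v) := by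
    intro hD
    obtain ⟨q⟩ := ‹Nonempty V›
    obtain ⟨f, hf, hred⟩ := exists_reduced m hconn q D
    have hq : D q + glap m f q < 0 := by
      by_contra! hq
      refine hD ⟨fun v => D v + glap m f v, fun v => ?_, f, fun v => add_sub_cancel_left _ _⟩
      by_cases hv : v = q
      · exact hv ▸ hq
      · exact hf v hv
    obtain ⟨r, hr, hburn⟩ := exists_burning q _ hred
    let L : LinearOrder V := LinearOrder.lift' r hr
    have hnu : ∀ v, nuOrd m L v =
        (∑ w ∈ Finset.univ.filter (fun w => r w < r v), (m v w : ℤ)) - 1 := by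
      intro v
      unfold nuOrd
      congr 1
    refine ⟨L, fun v => nuOrd m L v - (D v + glap m f v), fun v => ?_,
      fun v => (-1) * f v, fun v => ?_⟩
    · simp only [hnu]
      by_cases hv : v = q
      · subst hv
        have : (0 : ℤ) ≤ ∑ w ∈ Finset.univ.filter (fun w => r w < r v), (m v w : ℤ) := by
          positivity
        linarith
      · have h := hburn v hv
        simp only [Finset.mem_filter, Finset.mem_univ, true_and, not_le] at h
        linarith
    · have := glap_smul m (-1) f v
      change _ = glap m (fun x => (-1) * f x) v
      rw [this]
      ring
  have hnot : GLinNE m D → ¬ ∃ L : LinearOrder V, GLinNE m (fun v => nuOrd m L v - D v) := by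
    rintro ⟨E, hE, f, hf⟩ ⟨L, E', hE', f', hf'⟩
    refine nuOrd_not_effective m L (fun x => f x + f' x) fun v => ?_
    rw [glap_add]
    have h1 : E v - D v = glap m f v := hf v
    have h2 : E' v - (nuOrd m L v - D v) = glap m f' v := hf' v
    linarith [hE v, hE' v]
  by_cases h : GLinNE m D
  · exact Or.inl ⟨h, hnot h⟩
  · exact Or.inr ⟨hex h, h⟩
end
end

section
/- Property (RR2) for graphs: Let G be a finite connected loopless multigraph of genus g = |E| − |V| + 1 with canonical divisor K_G(v) = deg(v) − 2. For every divisor D on G with deg(D) = g − 1, one has |D| = ∅ if and only if |K_G − D| = ∅. -/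
/-!
The proof follows Dhar and Baker–Norine. Call a divisor `E` *orderable* if every nonempty set `A` of
vertices contains a vertex `v` with `E v` smaller than the number of edges from `v` to the complement
of `A`.

* An orderable divisor is not equivalent to an effective one: if `E + lap f` were effective, the set
  on which `f` is minimal would violate orderability (`not_linNE_of_orderable`).
* If `|D| = ∅`, then `D` is equivalent to an orderable divisor (`exists_orderable`). Fix a vertex `q`.
  Among the `f` with `f q = 0` and `D + lap f ≥ 0` off `q`, one minimizing `∑ f` exists; it makes
  `D + lap f` reduced at `q`, and its value at `q` is negative since `|D| = ∅`.
* Burning the vertices of an orderable `E` one at a time yields a total order on `V` with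
  `E v ≤ #(edges from v to earlier vertices) - 1`. The right-hand side has degree
  `|E(G)| - |V| = g - 1`, so if `deg E = g - 1` equality holds everywhere. Then `K - E` is the
  corresponding divisor for the reversed order, hence is again orderable
  (`orderable_canonical_sub`), so `|K - D| = ∅`.

The converse is the same statement applied to `K - D`.
-/

open scoped Classical

noncomputable section

/-! ### Principal divisors and orderability -/

/-- The principal divisor of `f`. -/
def lap {V : Type} [Fintype V] (m : V → V → ℕ) (f : V → ℤ) (v : V) : ℤ :=
  ∑ w, (m v w : ℤ) * (f v - f w)

/-- The number of edges from `v` to vertices outside `A`. -/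
def outdeg {V : Type} [Fintype V] (m : V → V → ℕ) (A : Finset V) (v : V) : ℤ :=
  ∑ w, if w ∈ A then 0 else (m v w : ℤ)

/-- Every nonempty vertex set `A` has a member at which `E` is less than the number of edges
leaving `A`; equivalently, no nonempty set (the whole of `V` included) can lend along its boundary
while staying nonnegative on the set. -/
def Orderable {V : Type} [Fintype V] (m : V → V → ℕ) (E : V → ℤ) : Prop :=
  ∀ A : Finset V, A.Nonempty → ∃ v ∈ A, E v < outdeg m A v

section

variable {V : Type} [Fintype V] {m : V → V → ℕ}

lemma lap_add (f h : V → ℤ) (v : V) : lap m (fun u => f u + h u) v = lap m f v + lap m h v := by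
  simp only [lap, ← Finset.sum_add_distrib]
  exact Finset.sum_congr rfl fun w _ => by ring

lemma lap_smul (c : ℤ) (f : V → ℤ) (v : V) : lap m (fun u => c * f u) v = c * lap m f v := by
  simp only [lap, Finset.mul_sum]
  exact Finset.sum_congr rfl fun w _ => by ring

lemma lap_sum (F : V → V → ℤ) (v : V) :
    lap m (fun u => ∑ i, F i u) v = ∑ i, lap m (F i) v := by
  simp only [lap]
  rw [Finset.sum_comm]
  refine Finset.sum_congr rfl fun w _ => ?_
  rw [← Finset.mul_sum, Finset.sum_sub_distrib]

lemma lap_sub_const (f : V → ℤ) (c : ℤ) (v : V) : lap m (fun u => f u - c) v = lap m f v := by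
  simp [lap]

/-- Edges inside `A` contribute nothing to the degree of a principal divisor on `A`. -/
lemma sum_lap (hsymm : ∀ v w, m v w = m w v) (f : V → ℤ) (A : Finset V) :
    ∑ v ∈ A, lap m f v
      = ∑ v ∈ A, ∑ w, if w ∈ A then 0 else (m v w : ℤ) * (f v - f w) := by
  have hin : ∑ v ∈ A, ∑ w ∈ A, (m v w : ℤ) * (f v - f w) = 0 := by
    have h : ∑ v ∈ A, ∑ w ∈ A, (m v w : ℤ) * (f v - f w)
        = - ∑ v ∈ A, ∑ w ∈ A, (m v w : ℤ) * (f v - f w) := by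
      conv_lhs => rw [Finset.sum_comm]
      rw [← Finset.sum_neg_distrib]
      refine Finset.sum_congr rfl fun v _ => ?_
      rw [← Finset.sum_neg_distrib]
      refine Finset.sum_congr rfl fun w _ => ?_
      rw [hsymm w v]
      ring
    omega
  have hsplit : ∀ v, lap m f v = ∑ w ∈ A, (m v w : ℤ) * (f v - f w)
      + ∑ w, if w ∈ A then 0 else (m v w : ℤ) * (f v - f w) := by
    intro v
    rw [lap, ← Finset.sum_filter_add_sum_filter_not Finset.univ (fun w => w ∈ A)]
    congr 1
    · simp
    · rw [Finset.sum_filter]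
      exact Finset.sum_congr rfl fun w _ => by split_ifs <;> simp_all
  rw [Finset.sum_congr rfl fun v _ => hsplit v, Finset.sum_add_distrib, hin, zero_add]

/-! ### Existence of reduced divisors -/

/-- Some principal divisor is nonnegative off `q` and positive at a prescribed `v ≠ q`. By induction
along a path from `q` to `v`. -/
lemma exists_pos_lap (hsymm : ∀ v w, m v w = m w v)
    (hconn : ∀ v w : V, Relation.ReflTransGen (fun a b => 0 < m a b) v w) (q v : V) :
    ∃ f : V → ℤ, (∀ u, u ≠ q → 0 ≤ lap m f u) ∧ (v ≠ q → 1 ≤ lap m f v) := by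
  -- Lending one chip from `w` along each of its edges gives `m u w` to every other `u`.
  have hind : ∀ w u : V, u ≠ w → lap m (fun x => if x = w then -1 else 0) u = (m u w : ℤ) := by
    intro w u hu
    simp [lap, hu]
  induction hconn q v with
  | refl => exact ⟨fun _ => 0, by simp [lap], fun h => absurd rfl h⟩
  | @tail w v _ hwv ih =>
    obtain ⟨f, hf, hfw⟩ := ih
    have hmvw : (1 : ℤ) ≤ m v w := by
      have := hsymm w v
      exact_mod_cast (by omega : 1 ≤ m v w)
    by_cases hvw : v = w
    · subst hvw
      exact ⟨f, hf, hfw⟩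
    by_cases hwq : w = q
    · subst hwq
      refine ⟨fun x => if x = w then -1 else 0, fun u hu => ?_, fun hv => ?_⟩
      · rw [hind w u hu]; positivity
      · rw [hind w v hv]; exact hmvw
    · have hdeg : (0 : ℤ) ≤ ∑ x, (m w x : ℤ) := Finset.sum_nonneg fun x _ => by positivity
      -- The multiple of `f` compensates the debt at `w` caused by lending.
      refine ⟨fun x => (∑ x, (m w x : ℤ)) * f x + (if x = w then -1 else 0),
        fun u hu => ?_, fun hv => ?_⟩
      · rw [lap_add, lap_smul]
        by_cases huw : u = w
        · subst huw
          have h1 : - (∑ x, (m u x : ℤ)) ≤ lap m (fun x => if x = u then -1 else 0) u := by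
            rw [lap, ← Finset.sum_neg_distrib]
            refine Finset.sum_le_sum fun x _ => ?_
            by_cases hx : x = u <;> simp [hx]
          nlinarith [hfw hu]
        · rw [hind w u huw]
          have := hf u hu
          positivity
      · rw [lap_add, lap_smul, hind w v hvw]
        have := mul_nonneg hdeg (hf v hv)
        omega

lemma exists_nonneg_off (hsymm : ∀ v w, m v w = m w v)
    (hconn : ∀ v w : V, Relation.ReflTransGen (fun a b => 0 < m a b) v w) (q : V) (D : V → ℤ) :
    ∃ f : V → ℤ, f q = 0 ∧ ∀ u, u ≠ q → 0 ≤ D u + lap m f u := by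
  choose F hF hF1 using exists_pos_lap hsymm hconn q
  let h : V → ℤ := fun u => ∑ i, |D i| * F i u
  refine ⟨fun u => h u - h q, by simp, fun u hu => ?_⟩
  rw [lap_sub_const, lap_sum (fun i u => |D i| * F i u)]
  simp only [lap_smul]
  have h1 : |D u| * lap m (F u) u ≤ ∑ i, |D i| * lap m (F i) u :=
    Finset.single_le_sum (f := fun i => |D i| * lap m (F i) u)
      (fun i _ => mul_nonneg (abs_nonneg _) (hF i u hu)) (Finset.mem_univ u)
  have h2 : |D u| ≤ |D u| * lap m (F u) u :=
    le_mul_of_one_le_right (abs_nonneg _) (hF1 u hu)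
  have h3 := neg_abs_le (D u)
  omega

/-- Potentials making `D` nonnegative off `q` are bounded below uniformly: the boundary of a
sublevel set not containing `q` carries total slope at most the degree of `D` on it. -/
lemma exists_lower_bound (hsymm : ∀ v w, m v w = m w v)
    (hconn : ∀ v w : V, Relation.ReflTransGen (fun a b => 0 < m a b) v w) (q : V) (D : V → ℤ)
    (v : V) :
    ∃ b : ℤ, ∀ f : V → ℤ, f q = 0 → (∀ u, u ≠ q → 0 ≤ D u + lap m f u) → b ≤ f v := by
  induction hconn q v with
  | refl => exact ⟨0, fun f hf _ => hf.ge⟩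
  | @tail w v _ hwv ih =>
    obtain ⟨b, hb⟩ := ih
    have hC : (0 : ℤ) ≤ ∑ u, |D u| := Finset.sum_nonneg fun u _ => abs_nonneg _
    refine ⟨min 0 (b - ∑ u, |D u|), fun f hfq hf => ?_⟩
    have hbw := hb f hfq hf
    by_contra! hlt
    obtain ⟨hv0, hvb⟩ := lt_min_iff.mp hlt
    let A : Finset V := Finset.univ.filter fun u => f u ≤ f v
    have hA : ∀ u, u ∈ A ↔ f u ≤ f v := fun u => by simp [A]
    have hwA : w ∉ A := by rw [hA]; omega
    have hvA : v ∈ A := by rw [hA]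
    have hterm : ∀ a ∈ A, ∀ u, 0 ≤ (if u ∈ A then 0 else (m a u : ℤ) * (f u - f a)) := by
      intro a ha u
      split_ifs with hu
      · exact le_rfl
      · rw [hA] at ha hu
        exact mul_nonneg (by positivity) (by omega)
    have h1 : (m v w : ℤ) * (f w - f v)
        ≤ ∑ a ∈ A, ∑ u, (if u ∈ A then 0 else (m a u : ℤ) * (f u - f a)) := by
      calc (m v w : ℤ) * (f w - f v)
          = (if w ∈ A then 0 else (m v w : ℤ) * (f w - f v)) := by rw [if_neg hwA]
        _ ≤ ∑ u, (if u ∈ A then 0 else (m v u : ℤ) * (f u - f v)) :=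
            Finset.single_le_sum (f := fun u => if u ∈ A then 0 else (m v u : ℤ) * (f u - f v))
              (fun u _ => hterm v hvA u) (Finset.mem_univ w)
        _ ≤ _ := Finset.single_le_sum
              (f := fun a => ∑ u, (if u ∈ A then 0 else (m a u : ℤ) * (f u - f a)))
              (fun a ha => Finset.sum_nonneg fun u _ => hterm a ha u) hvA
    have h2 : ∑ a ∈ A, ∑ u, (if u ∈ A then 0 else (m a u : ℤ) * (f u - f a))
        = - ∑ a ∈ A, lap m f a := by
      rw [sum_lap hsymm, ← Finset.sum_neg_distrib]
      refine Finset.sum_congr rfl fun a _ => ?_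
      rw [← Finset.sum_neg_distrib]
      refine Finset.sum_congr rfl fun u _ => ?_
      split_ifs <;> ring
    have h3 : - ∑ a ∈ A, lap m f a ≤ ∑ a ∈ A, |D a| := by
      rw [← Finset.sum_neg_distrib]
      refine Finset.sum_le_sum fun a ha => ?_
      have haq : a ≠ q := by
        rintro rfl
        rw [hA] at ha
        omega
      have := hf a haq
      have := le_abs_self (D a)
      omega
    have h4 : ∑ a ∈ A, |D a| ≤ ∑ u, |D u| :=
      Finset.sum_le_sum_of_subset_of_nonneg (Finset.subset_univ _) fun u _ _ => abs_nonneg _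
    have h5 : f w - f v ≤ (m v w : ℤ) * (f w - f v) := by
      have : (1 : ℤ) ≤ m v w := by
        have := hsymm w v
        exact_mod_cast (by omega : 1 ≤ m v w)
      exact le_mul_of_one_le_left (by omega) this
    omega

lemma lap_neg_indicator (A : Finset V) (v : V) :
    lap m (fun x => if x ∈ A then -1 else 0) v
      = if v ∈ A then - outdeg m A v else ∑ w, if w ∈ A then (m v w : ℤ) else 0 := by
  split_ifs with hv
  · rw [lap, outdeg, ← Finset.sum_neg_distrib]
    refine Finset.sum_congr rfl fun w _ => ?_
    by_cases hw : w ∈ A <;> simp [hv, hw]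
  · rw [lap]
    refine Finset.sum_congr rfl fun w _ => ?_
    by_cases hw : w ∈ A <;> simp [hv, hw]

/-- A divisor class without effective members contains an orderable divisor. -/
lemma exists_orderable [Nonempty V] (hsymm : ∀ v w, m v w = m w v)
    (hconn : ∀ v w : V, Relation.ReflTransGen (fun a b => 0 < m a b) v w) (D : V → ℤ)
    (hD : ¬ GLinNE m D) : ∃ f : V → ℤ, Orderable m (fun v => D v + lap m f v) := by
  obtain ⟨q⟩ := ‹Nonempty V›
  choose b hb using exists_lower_bound hsymm hconn q D
  obtain ⟨f₀, hf₀q, hf₀⟩ := exists_nonneg_off hsymm hconn q D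
  obtain ⟨s, ⟨f, hfq, hf, rfl⟩, hmin⟩ := Int.exists_least_of_bdd
    (P := fun s => ∃ f : V → ℤ, f q = 0 ∧ (∀ u, u ≠ q → 0 ≤ D u + lap m f u) ∧ ∑ u, f u = s)
    ⟨∑ u, b u, by
      rintro _ ⟨f, hfq, hf, rfl⟩
      exact Finset.sum_le_sum fun u _ => hb u f hfq hf⟩
    ⟨_, f₀, hf₀q, hf₀, rfl⟩
  have hneg : D q + lap m f q < 0 := by
    by_contra! h
    refine hD ⟨fun v => D v + lap m f v, fun v => ?_, f, fun v => by simp [lap]⟩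
    by_cases hv : v = q
    · subst hv; exact h
    · exact hf v hv
  refine ⟨f, fun A hA => ?_⟩
  by_cases hqA : q ∈ A
  · refine ⟨q, hqA, lt_of_lt_of_le hneg (Finset.sum_nonneg fun w _ => ?_)⟩
    split_ifs <;> positivity
  by_contra! hcon
  -- Otherwise all of `A` can lend once, which lowers `∑ f`.
  have hle := hmin _ ⟨fun u => f u + (if u ∈ A then -1 else 0), by simp [hfq, hqA], fun u hu => by
    rw [lap_add, lap_neg_indicator]
    split_ifs with huA
    · have := hcon u huA
      omega
    · have h1 := hf u hu
      have h2 : (0 : ℤ) ≤ ∑ w, if w ∈ A then (m u w : ℤ) else 0 :=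
        Finset.sum_nonneg fun w _ => by split_ifs <;> positivity
      omega, rfl⟩
  rw [Finset.sum_add_distrib] at hle
  have hcard : (∑ u, if u ∈ A then (-1 : ℤ) else 0) = -(A.card : ℤ) := by
    simp
  have := hA.card_pos
  omega

/-! ### Orderable divisors and burning orders -/

lemma not_linNE_of_orderable [Nonempty V] (E : V → ℤ) (hE : Orderable m E) : ¬ GLinNE m E := by
  rintro ⟨E', hE', f, hf⟩
  obtain ⟨x, hx⟩ := Finite.exists_min f
  obtain ⟨v, hvA, hv⟩ := hE (Finset.univ.filter fun u => f u = f x) ⟨x, by simp⟩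
  have hvx : f v = f x := by simpa using hvA
  have h1 : ∑ w, (m v w : ℤ) * (f v - f w)
      ≤ - outdeg m (Finset.univ.filter fun u => f u = f x) v := by
    rw [outdeg, ← Finset.sum_neg_distrib]
    refine Finset.sum_le_sum fun w _ => ?_
    have hw := hx w
    by_cases hwx : f w = f x
    · simp [hwx, hvx]
    · simp only [Finset.mem_filter, Finset.mem_univ, true_and, hwx, if_false]
      have : f v - f w ≤ -1 := by omega
      nlinarith [Int.natCast_nonneg (m v w)]
  have h2 := hf v
  have h3 := hE' v
  omega

/-- Dhar's burning: an orderable divisor is dominated by the divisor of a total order. -/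
lemma exists_rank (E : V → ℤ) (hE : Orderable m E) :
    ∃ r : V → ℕ, Function.Injective r ∧
      ∀ v, E v < ∑ w, if r w < r v then (m v w : ℤ) else 0 := by
  -- After `n` steps, `B` is burned and ranked by numbers below `n`.
  have key : ∀ n ≤ Fintype.card V, ∃ (B : Finset V) (r : V → ℕ), B.card = n ∧
      (∀ v ∈ B, r v < n) ∧ Set.InjOn r B ∧
      ∀ v ∈ B, E v < ∑ w, if w ∈ B ∧ r w < r v then (m v w : ℤ) else 0 := by
    intro n
    induction n with
    | zero => exact fun _ => ⟨∅, fun _ => 0, by simp⟩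
    | succ n ih =>
      intro hn
      obtain ⟨B, r, hcard, hlt, hinj, hEB⟩ := ih (by omega)
      have hne : (Bᶜ).Nonempty := by
        rw [← Finset.card_pos, Finset.card_compl]
        omega
      obtain ⟨x, hxB, hx⟩ := hE Bᶜ hne
      rw [Finset.mem_compl] at hxB
      have hne' : ∀ v ∈ B, v ≠ x := fun v hv h => hxB (h ▸ hv)
      have hr : ∀ v ∈ B, Function.update r x n v = r v := fun v hv => by simp [hne' v hv]
      refine ⟨insert x B, Function.update r x n, by rw [Finset.card_insert_of_notMem hxB, hcard],
        ?_, ?_, ?_⟩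
      · intro v hv
        rcases Finset.mem_insert.mp hv with rfl | hv
        · simp
        · rw [hr v hv]
          have := hlt v hv
          omega
      · intro u hu v hv huv
        rcases Finset.mem_insert.mp hu with rfl | hu' <;>
          rcases Finset.mem_insert.mp hv with rfl | hv'
        · rfl
        · rw [hr v hv', Function.update_self] at huv
          have := hlt v hv'
          omega
        · rw [hr u hu', Function.update_self] at huv
          have := hlt u hu'
          omega
        · rw [hr u hu', hr v hv'] at huv
          exact hinj hu' hv' huv
      · intro v hv
        rcases Finset.mem_insert.mp hv with rfl | hv
        · refine hx.trans_le (Finset.sum_le_sum fun w _ => ?_)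
          by_cases hw : w ∈ B
          · have := hlt w hw
            simp [hw, hr w hw, this]
          · simp only [Finset.mem_compl, hw, not_false_eq_true, if_true]
            split_ifs <;> positivity
        · refine (hEB v hv).trans_le (Finset.sum_le_sum fun w _ => ?_)
          by_cases hw : w ∈ B
          · simp [hw, hr w hw, hr v hv]
          · simp only [hw, false_and, if_false]
            split_ifs <;> positivity
  obtain ⟨B, r, hcard, -, hinj, hEB⟩ := key _ le_rfl
  obtain rfl : B = Finset.univ := Finset.eq_univ_of_card B hcard
  exact ⟨r, by simpa [Set.injOn_univ] using hinj, fun v => by simpa using hEB v (Finset.mem_univ v)⟩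

/-- Each edge is counted once, from its later endpoint. -/
lemma two_mul_sum_earlier (hsymm : ∀ v w, m v w = m w v) (hloopless : ∀ v, m v v = 0)
    (r : V → ℕ) (hr : Function.Injective r) :
    2 * ∑ v, ∑ w, (if r w < r v then (m v w : ℤ) else 0) = ∑ v, ∑ w, (m v w : ℤ) := by
  have hswap : ∑ v, ∑ w, (if r w < r v then (m v w : ℤ) else 0)
      = ∑ v, ∑ w, (if r v < r w then (m v w : ℤ) else 0) := by
    rw [Finset.sum_comm]
    refine Finset.sum_congr rfl fun v _ => Finset.sum_congr rfl fun w _ => ?_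
    rw [hsymm w v]
  rw [two_mul]
  nth_rewrite 2 [hswap]
  simp only [← Finset.sum_add_distrib]
  refine Finset.sum_congr rfl fun v _ => Finset.sum_congr rfl fun w _ => ?_
  rcases lt_trichotomy (r v) (r w) with h | h | h
  · simp [h, h.le]
  · obtain rfl := hr h
    simp [hloopless]
  · simp [h, h.le]

/-! ### Residuation -/

/-- In degree `g - 1 = |E(G)| - |V|`, orderability passes to the residual divisor, by reversing the
order of burning. -/
lemma orderable_canonical_sub (hsymm : ∀ v w, m v w = m w v) (hloopless : ∀ v, m v v = 0)
    (E : V → ℤ) (hE : Orderable m E)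
    (hdeg : 2 * ∑ v, E v = ∑ v, ∑ w, (m v w : ℤ) - 2 * Fintype.card V) :
    Orderable m (fun v => (∑ w, (m v w : ℤ)) - 2 - E v) := by
  obtain ⟨r, hr, hlt⟩ := exists_rank E hE
  have hle : ∀ v ∈ Finset.univ, E v ≤ (∑ w, if r w < r v then (m v w : ℤ) else 0) - 1 :=
    fun v _ => by have := hlt v; omega
  have hsum : ∑ v, E v = ∑ v, ((∑ w, if r w < r v then (m v w : ℤ) else 0) - 1) := by
    have := two_mul_sum_earlier hsymm hloopless r hr
    rw [Finset.sum_sub_distrib]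
    simp only [Finset.sum_const, Finset.card_univ, nsmul_eq_mul, mul_one]
    omega
  have heq := (Finset.sum_eq_sum_iff_of_le hle).mp hsum
  intro A hA
  obtain ⟨v, hvA, hv⟩ := A.exists_max_image r hA
  refine ⟨v, hvA, ?_⟩
  -- Neighbours of the latest vertex of `A` are earlier than it or outside `A`.
  have h1 : ∑ w, (m v w : ℤ)
      ≤ (∑ w, if r w < r v then (m v w : ℤ) else 0) + outdeg m A v := by
    rw [outdeg, ← Finset.sum_add_distrib]
    refine Finset.sum_le_sum fun w _ => ?_
    by_cases hw : w ∈ A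
    · rcases (hv w hw).lt_or_eq with h | h
      · simp [h, hw]
      · obtain rfl := hr h
        simp [hloopless, hw]
    · simp only [hw, if_false]
      split_ifs <;> simp
  have h2 := heq v (Finset.mem_univ v)
  simp only
  omega

lemma not_linNE_canonical_sub [Nonempty V] (hsymm : ∀ v w, m v w = m w v)
    (hloopless : ∀ v, m v v = 0)
    (hconn : ∀ v w : V, Relation.ReflTransGen (fun a b => 0 < m a b) v w) (D : V → ℤ)
    (hdeg : 2 * ∑ v, D v = ∑ v, ∑ w, (m v w : ℤ) - 2 * Fintype.card V) (hD : ¬ GLinNE m D) :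
    ¬ GLinNE m (fun v => (∑ w, (m v w : ℤ)) - 2 - D v) := by
  obtain ⟨f, hf⟩ := exists_orderable hsymm hconn D hD
  have h0 : ∑ v, lap m f v = 0 := by
    rw [sum_lap hsymm]
    simp
  have hord := orderable_canonical_sub hsymm hloopless _ hf (by
    rw [Finset.sum_add_distrib, h0, add_zero, hdeg])
  rintro ⟨E', hE', h, hh⟩
  refine not_linNE_of_orderable _ hord ⟨E', hE', fun u => h u + f u, fun v => ?_⟩
  change _ = lap m (fun u => h u + f u) v
  rw [lap_add]
  have : _ = lap m h v := hh v
  rw [← this]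
  ring

end

/-- Property (RR2) for graphs. -/
theorem graph_RR2 {V : Type} [Fintype V] [Nonempty V]
    (m : V → V → ℕ)
    (hsymm : ∀ v w, m v w = m w v)
    (hloopless : ∀ v, m v v = 0)
    (hconn : ∀ v w : V, Relation.ReflTransGen (fun a b => 0 < m a b) v w)
    (numEdges : ℕ) (hE : 2 * numEdges = ∑ v, ∑ w, m v w)
    (g : ℤ) (hg : g = (numEdges : ℤ) - (Fintype.card V : ℤ) + 1)
    (K : V → ℤ) (hK : ∀ v, K v = (∑ w, (m v w : ℤ)) - 2)
    (D : V → ℤ) (hdeg : (∑ v, D v) = g - 1) :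
    ¬ GLinNE m D ↔ ¬ GLinNE m (fun v => K v - D v) := by
  obtain rfl : K = fun v => (∑ w, (m v w : ℤ)) - 2 := funext hK
  have hE' : (2 : ℤ) * numEdges = ∑ v, ∑ w, (m v w : ℤ) := by exact_mod_cast hE
  have hdeg1 : 2 * ∑ v, D v = ∑ v, ∑ w, (m v w : ℤ) - 2 * Fintype.card V := by omega
  refine ⟨not_linNE_canonical_sub hsymm hloopless hconn D hdeg1, fun h => ?_⟩
  have h' := not_linNE_canonical_sub hsymm hloopless hconn
    (fun v => (∑ w, (m v w : ℤ)) - 2 - D v) (by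
      simp only [Finset.sum_sub_distrib, Finset.sum_const, Finset.card_univ, nsmul_eq_mul]
      omega) h
  simpa using h'
end
end
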